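/- Let q = 2^m ≥ 8 and suppose k is an integer with 3q − 4 ≤ 4k and k ≤ q − 4; set r = q − k. Let u ∈ 𝔽_q^q have syndrome H·u^T = (0, …, 0, w_{r-3}, w_{r-2}, w_{r-1})^T with w_{r-3} ≠ 0 and w_{r-2} = θ^{-1} w_{r-3}. Then u is not a deep hole of TRS_k(𝔽_q, θ). -/

import Mathlib

/-!
Write `r = q - k`. The covering radius is at least `r`: for every twisted polynomial `f`, the
difference `X ^ k - f` is nonzero of degree at most `k`, so it has at most `k` roots (`le_covRad`).
It therefore suffices to find a codeword agreeing with `u` in at least `k + 1` places.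

Let `p` be the polynomial of degree `< q` interpolating `u`. Its coefficients are, up to sign, the
moments `∑ p(a) a^i` (`sum_eval_mul_pow`), so the syndrome says that `p` has degree `k + 2`, leading
coefficient `-w_{r-3}`, next coefficient `-θ⁻¹ w_{r-3}`, and that
`-p_k + θ p_{k-1} = w_{r-1}`. Let `G` be a monic polynomial of degree `k + 2` whose roots are
`k + 1` distinct elements, namely the complement of a set `T` with `r - 1` elements, together with
one further root `b`. Then `p + w_{r-3} G` is a twisted polynomial as soon as the elementary
symmetric functions of the roots satisfy `e₁ = θ⁻¹` and `e₂ + θ e₃ = w_{r-1} / w_{r-3}`. In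
characteristic 2, Newton's identity `p₃ = e₁³ + e₁ e₂ + e₃` turns this into a prescription of the
sum and of the sum of cubes of the roots. As `∑ a = ∑ a³ = 0` over the whole field, this is the
same prescription for the elements of `T` and `b`.

It remains to realise any pair (sum `t ≠ 0`, sum of cubes `s`) by `r` elements of which `r - 1` are
distinct (`exists_sum_cubes`). Choose a set `S` of `r - 4` elements whose sum is not `t`, split the
missing sum as `d + e` with `d, e ≠ 0` and `d³ ≠ e³`, and look for the last four elements in the form
`x, x + d, y, y + e`. The condition on the cubes becomes
`(d x² + d² x) + (e y² + e² y) = const`. The two brackets range over two distinct hyperplanes of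
`F` over the field with two elements, so there are exactly `q` solutions
`(x, y)` (`card_fiber_coprod`). The four elements coincide with each other, or with an element of
`S`, at most `8 (r - 3) ≤ 2 q - 16` times over all the solutions together, because each possible
coincidence leaves at most two solutions. Hence some solution has at most one coincidence, which
is harmless: the element involved is taken as `b`.
-/

open Polynomial Finset

/-- The set `S_{k,θ}` of twisted polynomials
`Σ_{i=0}^{k-2} f_i x^i + f_{k-1}(x^{k-1} + θ x^k)`. -/
def Sset (F : Type*) [Field F] (k : ℕ) (θ : F) : Set (Polynomial F) :=
  {p | ∃ f : ℕ → F, p = (∑ i ∈ Finset.range (k - 1), Polynomial.C (f i) * Polynomial.X ^ i)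
        + Polynomial.C (f (k - 1)) * (Polynomial.X ^ (k - 1) + Polynomial.C θ * Polynomial.X ^ k)}

/-- The twisted Reed–Solomon code `TRS_k(A, θ)` for the evaluation sequence `α`. -/
def TRS {F : Type*} [Field F] {n : ℕ} (α : Fin n → F) (k : ℕ) (θ : F) : Set (Fin n → F) :=
  {v | ∃ p ∈ Sset F k θ, v = fun j => p.eval (α j)}

/-- The (Hamming) error distance `d(u, C)` from a word `u` to a code `C`. -/
noncomputable def distTo {F : Type*} [DecidableEq F] {n : ℕ} (u : Fin n → F)
    (C : Set (Fin n → F)) : ℕ :=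
  sInf {d | ∃ c ∈ C, hammingDist u c = d}

/-- The covering radius `ρ(C) = max_u d(u, C)` of a code `C`. -/
noncomputable def covRad {F : Type*} [DecidableEq F] {n : ℕ} (C : Set (Fin n → F)) : ℕ :=
  sSup {d | ∃ u, distTo u C = d}

/-- `u` is a deep hole of `C` if `d(u, C) = ρ(C)`. -/
def IsDeepHole {F : Type*} [DecidableEq F] {n : ℕ} (C : Set (Fin n → F)) (u : Fin n → F) :
    Prop :=
  distTo u C = covRad C

/-- The column vector `c_{r,θ}(a) = (1, a, …, a^{r-2}, a^{r-1} - θ a^r)ᵀ ∈ 𝔽_q^r`. -/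
def crv (F : Type*) [Field F] (r : ℕ) (θ a : F) : Fin r → F :=
  fun i => if (i : ℕ) = r - 1 then a ^ (r - 1) - θ * a ^ r else a ^ (i : ℕ)

/-- The parity-check matrix `H` whose `j`-th column is `c_{r,θ}(α_j)`. -/
def Hmat {F : Type*} [Field F] {n : ℕ} (r : ℕ) (θ : F) (α : Fin n → F) :
    Matrix (Fin r) (Fin n) F :=
  Matrix.of fun i j => crv F r θ (α j) i

/-! ### Counting pairs with a prescribed cubic sum -/

lemma quad_card {F : Type*} [Field F] [Fintype F] [DecidableEq F] {A : F} (hA : A ≠ 0) (B C : F) :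
    #{z : F | A * z ^ 2 + B * z = C} ≤ 2 := by
  by_contra! h
  obtain ⟨x, y, z, hx, hy, hz, hxy, hxz, hyz⟩ := Finset.two_lt_card_iff.1 h
  simp only [Finset.mem_filter, Finset.mem_univ, true_and] at hx hy hz
  have h1 : A * (x + y) + B = 0 := by
    apply mul_left_cancel₀ (sub_ne_zero.2 hxy)
    linear_combination hx - hy
  have h2 : A * (x + z) + B = 0 := by
    apply mul_left_cancel₀ (sub_ne_zero.2 hxz)
    linear_combination hx - hz
  have h3 : A * (y - z) = 0 := by linear_combination h1 - h2
  exact (mul_ne_zero hA (sub_ne_zero.2 hyz)) h3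

/-- A set of pairs parametrised by the roots of a genuine quadratic has at most two elements. -/
lemma param_card {F : Type*} [Field F] [Fintype F] [DecidableEq F] {A : F} (hA : A ≠ 0) (B C : F)
    (φ : F → F × F) (P : Finset (F × F)) (h : ∀ p ∈ P, ∃ z, A * z ^ 2 + B * z = C ∧ φ z = p) :
    #P ≤ 2 := by
  have : P ⊆ ({z : F | A * z ^ 2 + B * z = C} : Finset F).image φ := by
    intro p hp
    obtain ⟨z, hz, rfl⟩ := h p hp
    exact Finset.mem_image_of_mem _ (by simpa using hz)
  exact (Finset.card_le_card this).trans (Finset.card_image_le.trans (quad_card hA B C))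

/-- The additive map `x ↦ d x² + d² x = d³ ((x/d)² + x/d)`, whose image for `d ≠ 0`
is `d³` times the trace-zero hyperplane. -/
def artinSchreier {F : Type*} [Field F] [CharP F 2] (d : F) : F →+ F where
  toFun x := d * x ^ 2 + d ^ 2 * x
  map_zero' := by simp
  map_add' x y := by
    rw [add_pow_char]; ring

/-- If `d³ ≠ e³` the two hyperplanes are distinct, so their sum is all of `F`. A linear functional
killing both has the form `x ↦ Tr (c x)`; since `Tr` is Frobenius-invariant, this forces
`c d³ = 1 = c e³`. -/
lemma coprod_surjective {F : Type*} [Field F] [Fintype F] [CharP F 2] {d e : F} (hd : d ≠ 0)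
    (he : e ≠ 0) (hde : d ^ 3 ≠ e ^ 3) :
    Function.Surjective ((artinSchreier d).coprod (artinSchreier e)) := by
  let _ : Algebra (ZMod 2) F := ZMod.algebra F 2
  set L : (F × F) →ₗ[ZMod 2] F :=
    ((artinSchreier d).coprod (artinSchreier e)).toZModLinearMap 2 with hL
  have hLv : ∀ x y, L (x, y) = (d * x ^ 2 + d ^ 2 * x) + (e * y ^ 2 + e ^ 2 * y) := fun _ _ => rfl
  suffices h : LinearMap.range L = ⊤ from LinearMap.range_eq_top.1 h
  by_contra hne
  obtain ⟨f, hf0, hf⟩ := Submodule.exists_le_ker_of_lt_top _ (lt_top_iff_ne_top.2 hne)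
  have hnd := traceForm_nondegenerate (ZMod 2) F
  obtain ⟨c, hc⟩ := (LinearMap.BilinForm.toDual (Algebra.traceForm (ZMod 2) F) hnd).surjective f
  have hfc : ∀ x, f x = Algebra.trace (ZMod 2) F (c * x) := by
    intro x; rw [← hc]; rfl
  have hc0 : c ≠ 0 := by
    rintro rfl
    exact hf0 (LinearMap.ext fun x => by simp [hfc])
  have hfrob : ∀ x : F, Algebra.trace (ZMod 2) F (x ^ 2) = Algebra.trace (ZMod 2) F x := by
    intro x
    have := Algebra.trace_eq_of_algEquiv (FiniteField.frobeniusAlgEquiv (ZMod 2) F 2) x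
    simpa using this
  have key : ∀ g : F, g ≠ 0 →
      (∀ x, Algebra.trace (ZMod 2) F (c * (g * x ^ 2 + g ^ 2 * x)) = 0) → c * g ^ 3 = 1 := by
    intro g hg h
    -- `b` is the square root of `c g`, so that `Tr (c g x²) = Tr (b x)`
    obtain ⟨b, hb⟩ := (PerfectRing.bijective_frobenius (R := F) (p := 2)).surjective (c * g)
    replace hb : b ^ 2 = c * g := hb
    have hbc : b + c * g ^ 2 = 0 := by
      apply (traceForm_nondegenerate (ZMod 2) F).1
      intro x
      rw [Algebra.traceForm_apply]
      have h1 := h x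
      rw [mul_add, map_add, ← mul_assoc, ← hb, ← mul_pow, hfrob] at h1
      rw [add_mul, map_add, ← h1, mul_assoc]
    have hbc' : b = c * g ^ 2 := CharTwo.add_eq_zero.1 hbc
    have : c * g * (c * g ^ 3) = c * g * 1 := by
      rw [mul_one]; nth_rewrite 2 [← hb]; rw [hbc']; ring
    exact mul_left_cancel₀ (mul_ne_zero hc0 hg) this
  have h0 : ∀ p, Algebra.trace (ZMod 2) F (c * L p) = 0 := fun p => by
    rw [← hfc]; exact hf ⟨p, rfl⟩
  have h1 := key d hd fun x => by simpa [hLv] using h0 (x, 0)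
  have h2 := key e he fun x => by simpa [hLv] using h0 (0, x)
  exact hde (mul_left_cancel₀ hc0 (h1.trans h2.symm))

lemma card_fiber_coprod {F : Type*} [Field F] [Fintype F] [DecidableEq F] [CharP F 2] {d e : F}
    (hd : d ≠ 0) (he : e ≠ 0) (hde : d ^ 3 ≠ e ^ 3) (s : F) :
    #{p : F × F | (d * p.1 ^ 2 + d ^ 2 * p.1) + (e * p.2 ^ 2 + e ^ 2 * p.2) = s}
      = Fintype.card F := by
  have hs := coprod_surjective hd he hde
  set L := (artinSchreier d).coprod (artinSchreier e) with hL
  have h1 : #(univ : Finset (F × F)) = ∑ b ∈ (univ : Finset F), #{p ∈ univ | L p = b} :=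
    Finset.card_eq_sum_card_fiberwise (fun _ _ => by simp)
  rw [Finset.sum_congr rfl fun b _ =>
    AddMonoidHom.card_fiber_eq_of_mem_range L (hs b) (hs s)] at h1
  simp only [Finset.card_univ, Fintype.card_prod, Finset.sum_const, smul_eq_mul] at h1
  exact (Nat.eq_of_mul_eq_mul_left Fintype.card_pos h1).symm

/-! ### Sets with prescribed sum and sum of cubes -/

lemma exists_card_sum_ne {F : Type*} [Field F] [Fintype F] [DecidableEq F] (n : ℕ)
    (hn : n + 1 ≤ Fintype.card F) {t : F} (ht : t ≠ 0) :
    ∃ S : Finset F, #S = n ∧ ∑ a ∈ S, a ≠ t := by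
  rcases n with _ | n
  · exact ⟨∅, by simp, by simpa using ht.symm⟩
  obtain ⟨S, -, hS⟩ := Finset.exists_subset_card_eq (s := (univ : Finset F)) (n := n)
    (by rw [Finset.card_univ]; omega)
  obtain ⟨a, -, ha⟩ := Finset.exists_mem_notMem_of_card_lt_card
    (s := insert (t - ∑ a ∈ S, a) S) (t := (univ : Finset F))
    ((Finset.card_insert_le _ _).trans_lt (by rw [Finset.card_univ]; omega))
  rw [Finset.mem_insert, not_or] at ha
  refine ⟨insert a S, by rw [Finset.card_insert_of_notMem ha.2, hS], ?_⟩
  rw [Finset.sum_insert ha.2]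
  exact fun h => ha.1 (eq_sub_of_add_eq h)

lemma exists_pow_four_ne {F : Type*} [Field F] [Fintype F] (hF : 8 ≤ Fintype.card F) :
    ∃ δ : F, δ ^ 4 ≠ δ := by
  classical
  by_contra! h
  have hp : (X ^ 4 - X : F[X]) ≠ 0 := FiniteField.X_pow_card_sub_X_ne_zero F (by norm_num)
  have h1 : #(univ : Finset F) ≤ #(X ^ 4 - X : F[X]).roots.toFinset :=
    Finset.card_le_card fun x _ => by
      simp [hp, h x]
  have h2 := Multiset.toFinset_card_le (X ^ 4 - X : F[X]).roots
  have h3 := Polynomial.card_roots' (X ^ 4 - X : F[X])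
  rw [FiniteField.X_pow_card_sub_X_natDegree_eq F (by norm_num)] at h3
  rw [Finset.card_univ] at h1
  omega

/-- Every pair `(t, s)` with `t ≠ 0` is the pair (sum, sum of cubes) of `n + 4` elements of which
`n + 3` are known to be distinct. -/
lemma exists_sum_cubes {F : Type*} [Field F] [Fintype F] [DecidableEq F] [CharP F 2]
    (hF : 8 ≤ Fintype.card F) (n : ℕ) (hn : 4 * (n + 4) ≤ Fintype.card F + 4)
    {t : F} (ht : t ≠ 0) (s : F) :
    ∃ (T : Finset F) (b : F), #T = n + 3 ∧ ∑ a ∈ T, a + b = t ∧ ∑ a ∈ T, a ^ 3 + b ^ 3 = s := by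
  have two : (2 : F) = 0 := CharTwo.two_eq_zero
  obtain ⟨S, hSc, hSt⟩ := exists_card_sum_ne n (by omega) ht
  obtain ⟨δ, hδ⟩ := exists_pow_four_ne (F := F) hF
  set σ := ∑ a ∈ S, a with hσ
  have hτ : t - σ ≠ 0 := sub_ne_zero.2 (Ne.symm hSt)
  -- two differences `d`, `e` with `d + e = t - σ` and `d ^ 3 ≠ e ^ 3`
  obtain ⟨d, e, hd, he, hsum, hde⟩ : ∃ d e : F, d ≠ 0 ∧ e ≠ 0 ∧ d + e = t - σ ∧ d ^ 3 ≠ e ^ 3 := by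
    refine ⟨(t - σ) * δ, (t - σ) * (δ + 1), mul_ne_zero hτ ?_, mul_ne_zero hτ ?_, ?_, ?_⟩
    · rintro rfl; simp at hδ
    · intro h; apply hδ
      have : δ = 1 := by linear_combination h - two
      simp [this]
    · linear_combination (t - σ) * δ * two
    · intro h
      have h' : (t - σ) ^ 3 * (δ ^ 2 + δ + 1) = 0 := by
        linear_combination -h - (t - σ) ^ 3 * (δ ^ 2 + δ) * two
      have h'' := (mul_eq_zero.1 h').resolve_left (pow_ne_zero _ hτ)
      apply hδ
      linear_combination (δ ^ 2 - δ) * h''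
  have hde' : d + e ≠ 0 := hsum ▸ hτ
  set s' := s - ∑ a ∈ S, a ^ 3 - d ^ 3 - e ^ 3 with hs'
  set Sol : Finset (F × F) :=
    {p | (d * p.1 ^ 2 + d ^ 2 * p.1) + (e * p.2 ^ 2 + e ^ 2 * p.2) = s'} with hSol
  have hcard : #Sol = Fintype.card F := card_fiber_coprod hd he hde s'
  have memSol : ∀ p, p ∈ Sol ↔
      (d * p.1 ^ 2 + d ^ 2 * p.1) + (e * p.2 ^ 2 + e ^ 2 * p.2) = s' := by simp [hSol]
  have hf1 : ∀ a, #{p ∈ Sol | p.1 = a} ≤ 2 := fun a => by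
    apply param_card he (e ^ 2) (s' - (d * a ^ 2 + d ^ 2 * a)) (fun z => (a, z))
    rintro ⟨x, y⟩ hp
    rw [Finset.mem_filter, memSol] at hp
    obtain ⟨hp, rfl⟩ := hp
    exact ⟨y, by linear_combination hp, rfl⟩
  have hf2 : ∀ a, #{p ∈ Sol | p.2 = a} ≤ 2 := fun a => by
    apply param_card hd (d ^ 2) (s' - (e * a ^ 2 + e ^ 2 * a)) (fun z => (z, a))
    rintro ⟨x, y⟩ hp
    rw [Finset.mem_filter, memSol] at hp
    obtain ⟨hp, rfl⟩ := hp
    exact ⟨x, by linear_combination hp, rfl⟩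
  have hf3 : ∀ a, #{p ∈ Sol | p.1 + p.2 = a} ≤ 2 := fun a => by
    apply param_card hde' (d ^ 2 + e ^ 2) (s' - (e * a ^ 2 + e ^ 2 * a)) (fun z => (z, z + a))
    rintro ⟨x, y⟩ hp
    rw [Finset.mem_filter, memSol] at hp
    obtain ⟨hp, rfl⟩ := hp
    refine ⟨x, ?_, ?_⟩
    · dsimp only at hp ⊢
      linear_combination hp + (e * x ^ 2 + e ^ 2 * x + e * x * y) * two
    · ext
      · rfl
      · dsimp only; linear_combination x * two
  have hS : ∀ g : F × F → F, (∀ a, #{p ∈ Sol | g p = a} ≤ 2) → #{p ∈ Sol | g p ∈ S} ≤ 2 * n := by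
    intro g hg
    rw [← hSc]
    refine Finset.card_le_mul_card_image_of_maps_to (f := g) (by simp) 2 fun b _ => ?_
    exact (Finset.card_le_card
      (Finset.filter_subset_filter _ (Finset.filter_subset _ _))).trans (hg b)
  -- the number of coincidences among `S, x, x + d, y, y + e`, counted with multiplicity
  let W : F × F → ℕ := fun p =>
    (if p.1 ∈ S then 1 else 0) + (if p.1 + d ∈ S then 1 else 0)
    + (if p.2 ∈ S then 1 else 0) + (if p.2 + e ∈ S then 1 else 0)
    + (if p.1 + p.2 = 0 then 1 else 0) + (if p.1 + p.2 = e then 1 else 0)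
    + (if p.1 + p.2 = d then 1 else 0) + (if p.1 + p.2 = d + e then 1 else 0)
  obtain ⟨p, hpS, hpW⟩ : ∃ p ∈ Sol, W p ≤ 1 := by
    by_contra! h
    have h1 : #Sol * 2 ≤ ∑ p ∈ Sol, W p := by
      rw [← smul_eq_mul]
      exact Finset.card_nsmul_le_sum _ _ _ fun p hp => h p hp
    simp only [W, Finset.sum_add_distrib, ← Finset.card_filter] at h1
    have a1 := hS (fun p => p.1) hf1
    have a2 := hS (fun p => p.1 + d) fun a => by simpa [eq_sub_iff_add_eq] using hf1 (a - d)
    have a3 := hS (fun p => p.2) hf2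
    have a4 := hS (fun p => p.2 + e) fun a => by simpa [eq_sub_iff_add_eq] using hf2 (a - e)
    have b1 := hf3 0
    have b2 := hf3 e
    have b3 := hf3 d
    have b4 := hf3 (d + e)
    omega
  obtain ⟨x, y⟩ := p
  rw [memSol] at hpS
  have build : ∀ x₁ x₂ x₃ b : F, x₁ ∉ S → x₂ ∉ S → x₃ ∉ S → x₁ ≠ x₂ → x₁ ≠ x₃ → x₂ ≠ x₃ →
      x₁ + x₂ + x₃ + b = t - σ → x₁ ^ 3 + x₂ ^ 3 + x₃ ^ 3 + b ^ 3 = s - ∑ a ∈ S, a ^ 3 →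
      ∃ (T : Finset F) (b : F), #T = n + 3 ∧ ∑ a ∈ T, a + b = t ∧
        ∑ a ∈ T, a ^ 3 + b ^ 3 = s := by
    intro x₁ x₂ x₃ b h1 h2 h3 h12 h13 h23 hs1 hs3
    have m3 : x₂ ∉ insert x₃ S := by simp [h2, h23]
    have m2 : x₁ ∉ insert x₂ (insert x₃ S) := by simp [h1, h12, h13]
    refine ⟨insert x₁ (insert x₂ (insert x₃ S)), b, ?_, ?_, ?_⟩
    · rw [Finset.card_insert_of_notMem m2, Finset.card_insert_of_notMem m3,
        Finset.card_insert_of_notMem h3, hSc]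
    · rw [Finset.sum_insert m2, Finset.sum_insert m3, Finset.sum_insert h3]
      linear_combination hs1
    · rw [Finset.sum_insert m2, Finset.sum_insert m3, Finset.sum_insert h3]
      linear_combination hs3
  have c1 : x + (x + d) + y + (y + e) = t - σ := by linear_combination hsum + (x + y) * two
  have c3 : x ^ 3 + (x + d) ^ 3 + y ^ 3 + (y + e) ^ 3 = s - ∑ a ∈ S, a ^ 3 := by
    dsimp only at hpS
    rw [hs'] at hpS
    linear_combination hpS
      + (x ^ 3 + d * x ^ 2 + d ^ 2 * x + y ^ 3 + e * y ^ 2 + e ^ 2 * y) * two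
  have n1 : x ≠ x + d := by simpa using hd
  have n2 : y ≠ y + e := by simpa using he
  have q1 : x = y → x + y = 0 := by rintro rfl; exact CharTwo.add_self_eq_zero x
  have q2 : x = y + e → x + y = e := by rintro rfl; linear_combination y * two
  have q3 : x + d = y → x + y = d := by rintro rfl; linear_combination x * two
  have q4 : x + d = y + e → x + y = d + e := by
    intro h; linear_combination h + (y - d) * two
  have hcases : (x ∉ S ∧ x + d ∉ S ∧ y ∉ S ∧ x + y ≠ 0 ∧ x + y ≠ d) ∨
      (x ∉ S ∧ x + d ∉ S ∧ y + e ∉ S ∧ x + y ≠ e ∧ x + y ≠ d + e) ∨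
      (x ∉ S ∧ y ∉ S ∧ y + e ∉ S ∧ x + y ≠ 0 ∧ x + y ≠ e) ∨
      (x + d ∉ S ∧ y ∉ S ∧ y + e ∉ S ∧ x + y ≠ d ∧ x + y ≠ d + e) := by
    dsimp only [W] at hpW
    grind
  -- the element involved in the only coincidence, if there is one, is taken as `b`
  rcases hcases with h | h | h | h
  · exact build x (x + d) y (y + e) h.1 h.2.1 h.2.2.1 n1 (fun h' => h.2.2.2.1 (q1 h'))
      (fun h' => h.2.2.2.2 (q3 h')) c1 c3
  · exact build x (x + d) (y + e) y h.1 h.2.1 h.2.2.1 n1 (fun h' => h.2.2.2.1 (q2 h'))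
      (fun h' => h.2.2.2.2 (q4 h')) (by linear_combination c1) (by linear_combination c3)
  · exact build x y (y + e) (x + d) h.1 h.2.1 h.2.2.1 (fun h' => h.2.2.2.1 (q1 h'))
      (fun h' => h.2.2.2.2 (q2 h')) n2 (by linear_combination c1) (by linear_combination c3)
  · exact build (x + d) y (y + e) x h.1 h.2.1 h.2.2.1 (fun h' => h.2.2.2.1 (q3 h'))
      (fun h' => h.2.2.2.2 (q4 h')) n2 (by linear_combination c1) (by linear_combination c3)

/-! ### Power sums and coefficients -/

lemma esymm_cons {R : Type*} [CommSemiring R] (a : R) (M : Multiset R) (n : ℕ) :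
    (a ::ₘ M).esymm (n + 1) = M.esymm (n + 1) + a * M.esymm n := by
  simp [Multiset.esymm, Multiset.powersetCard_cons, Multiset.sum_map_mul_left]

lemma esymm_zero' {R : Type*} [CommSemiring R] (M : Multiset R) : M.esymm 0 = 1 := by
  simp [Multiset.esymm]

lemma esymm_one {R : Type*} [CommSemiring R] (M : Multiset R) : M.esymm 1 = M.sum := by
  simp [Multiset.esymm, Multiset.powersetCard_one]

/-- Newton's identity for the third power sum. -/
lemma newton_three {R : Type*} [CommRing R] (M : Multiset R) :
    (M.map (· ^ 3)).sum
      = M.esymm 1 ^ 3 - 3 * M.esymm 1 * M.esymm 2 + 3 * M.esymm 3 := by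
  induction M using Multiset.induction with
  | empty =>
    have h : ∀ n, (0 : Multiset R).esymm (n + 1) = 0 := fun n => by
      rw [Multiset.esymm, Multiset.powersetCard_eq_empty _ (by simp)]; simp
    rw [h 0, h 1, h 2]; simp
  | cons a M ih =>
    rw [Multiset.map_cons, Multiset.sum_cons, ih, esymm_cons a M 0, esymm_cons a M 1,
      esymm_cons a M 2, esymm_zero']
    ring

lemma sum_pow_of_lt {F : Type*} [Field F] [Fintype F] {n : ℕ} (hn : n < 2 * (Fintype.card F - 1)) :
    ∑ a : F, a ^ n = if n = Fintype.card F - 1 then -1 else 0 := by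
  classical
  split_ifs with h
  · subst h
    have hq : Fintype.card F - 1 ≠ 0 := by omega
    have h1 : ∀ a : F, a ^ (Fintype.card F - 1) = 1 - if a = 0 then 1 else 0 := by
      intro a
      by_cases ha : a = 0
      · simp [ha, hq]
      · simp [ha, FiniteField.pow_card_sub_one_eq_one a ha]
    rw [Finset.sum_congr rfl fun a _ => h1 a, Finset.sum_sub_distrib]
    simp
  · rcases lt_or_gt_of_ne h with h | h
    · exact FiniteField.sum_pow_lt_card_sub_one F n h
    · rw [← FiniteField.sum_pow_lt_card_sub_one F (n - (Fintype.card F - 1)) (by omega)]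
      refine Finset.sum_congr rfl fun a _ => ?_
      by_cases ha : a = 0
      · rw [ha, zero_pow (by omega), zero_pow (by omega)]
      · rw [← one_mul (a ^ (n - _)), ← FiniteField.pow_card_sub_one_eq_one a ha, ← pow_add]
        congr 1
        omega

/-- Moments of the value table of a polynomial of degree `< q` are its coefficients, reversed. -/
lemma sum_eval_mul_pow {F : Type*} [Field F] [Fintype F] (p : F[X])
    (hp : p.natDegree < Fintype.card F) {i : ℕ} (hi : i < Fintype.card F - 1) :
    ∑ a : F, p.eval a * a ^ i = -p.coeff (Fintype.card F - 1 - i) := by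
  have h1 : ∀ a : F, p.eval a * a ^ i
      = ∑ n ∈ Finset.range (Fintype.card F), p.coeff n * a ^ (n + i) := by
    intro a
    rw [Polynomial.eval_eq_sum_range' hp, Finset.sum_mul]
    exact Finset.sum_congr rfl fun n _ => by ring
  rw [Finset.sum_congr rfl fun a _ => h1 a, Finset.sum_comm]
  simp only [← Finset.mul_sum]
  rw [Finset.sum_eq_single (Fintype.card F - 1 - i)]
  · rw [sum_pow_of_lt (by omega), if_pos (by omega)]
    ring
  · intro n hn hne
    rw [Finset.mem_range] at hn
    rw [sum_pow_of_lt (by omega), if_neg (by omega), mul_zero]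
  · intro h
    rw [Finset.mem_range] at h
    omega

/-! ### The code and its covering radius -/

lemma mem_Sset_of_coeff {F : Type*} [Field F] {k : ℕ} (hk : 1 ≤ k) {θ : F} {p : F[X]}
    (hp : ∀ j, k < j → p.coeff j = 0) (hk' : p.coeff k = θ * p.coeff (k - 1)) :
    p ∈ Sset F k θ := by
  refine ⟨p.coeff, ?_⟩
  obtain ⟨k, rfl⟩ := Nat.exists_eq_add_of_le' hk
  have hd : p.natDegree < k + 2 := by
    have : p.natDegree ≤ k + 1 := Polynomial.natDegree_le_iff_coeff_eq_zero.2 hp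
    omega
  simp only [Nat.add_sub_cancel] at hk' ⊢
  conv_lhs => rw [p.as_sum_range_C_mul_X_pow' hd]
  rw [Finset.sum_range_succ, Finset.sum_range_succ, hk', C_mul]
  ring

lemma coeff_of_mem_Sset {F : Type*} [Field F] {k : ℕ} (hk : 1 ≤ k) {θ : F} {p : F[X]}
    (hp : p ∈ Sset F k θ) :
    (∀ j, k < j → p.coeff j = 0) ∧ p.coeff k = θ * p.coeff (k - 1) := by
  obtain ⟨f, rfl⟩ := hp
  have h : ∀ j, k - 1 ≤ j → (∑ i ∈ Finset.range (k - 1), C (f i) * X ^ i).coeff j = 0 := by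
    intro j hj
    simp only [Polynomial.finsetSum_coeff, Polynomial.coeff_C_mul_X_pow]
    refine Finset.sum_eq_zero fun i hi => if_neg ?_
    rw [Finset.mem_range] at hi
    omega
  refine ⟨fun j hj => ?_, ?_⟩
  · rw [coeff_add, h j (by omega), coeff_C_mul, coeff_add, coeff_C_mul, coeff_X_pow, coeff_X_pow,
      if_neg (by omega), if_neg (by omega)]
    simp
  · rw [coeff_add, h k (by omega), coeff_add, h (k - 1) le_rfl]
    simp only [coeff_C_mul, coeff_add, coeff_X_pow]
    have h1 : k ≠ k - 1 := by omega
    simp [h1, h1.symm, mul_comm]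

lemma distTo_le {F : Type*} [DecidableEq F] {n : ℕ} {u c : Fin n → F} {C : Set (Fin n → F)}
    (hc : c ∈ C) : distTo u C ≤ hammingDist u c :=
  Nat.sInf_le ⟨c, hc, rfl⟩

/-- The word of values of `X ^ k` is at distance at least `q - k` from the code, because
`X ^ k` minus a twisted polynomial is a nonzero polynomial of degree at most `k`. -/
lemma le_covRad {F : Type*} [Field F] [Fintype F] [DecidableEq F] {q k : ℕ} (hk : 1 ≤ k)
    (θ : F) {α : Fin q → F} (hα : Function.Bijective α) :
    q - k ≤ covRad (TRS α k θ) := by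
  have hmem : (0 : Fin q → F) ∈ TRS α k θ :=
    ⟨0, mem_Sset_of_coeff hk (by simp) (by simp), by ext; simp⟩
  have hbdd : BddAbove {d | ∃ u, distTo u (TRS α k θ) = d} := by
    refine ⟨q, ?_⟩
    rintro d ⟨u, rfl⟩
    exact (distTo_le hmem).trans (hammingDist_le_card_fintype.trans (by simp))
  refine le_trans ?_ (le_csSup hbdd ⟨fun j => α j ^ k, rfl⟩)
  refine le_csInf ⟨_, 0, hmem, rfl⟩ ?_
  rintro d ⟨c, ⟨p, hp, rfl⟩, rfl⟩
  obtain ⟨hp1, hp2⟩ := coeff_of_mem_Sset hk hp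
  have hne : X ^ k - p ≠ 0 := by
    intro h
    rw [sub_eq_zero] at h
    rw [← h, coeff_X_pow, coeff_X_pow, if_pos rfl, if_neg (by omega)] at hp2
    simp at hp2
  have hdeg : (X ^ k - p).natDegree ≤ k := by
    rw [Polynomial.natDegree_le_iff_coeff_eq_zero]
    intro j hj
    rw [coeff_sub, hp1 j hj, coeff_X_pow, if_neg (by omega), sub_zero]
  have hz : #{j : Fin q | ¬ (α j ^ k ≠ p.eval (α j))} ≤ k := by
    rw [← Finset.card_image_of_injective _ hα.1]
    refine le_trans (Finset.card_le_card (t := (X ^ k - p).roots.toFinset) ?_)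
      ((Multiset.toFinset_card_le _).trans ((Polynomial.card_roots' _).trans hdeg))
    intro a ha
    obtain ⟨j, hj, rfl⟩ := Finset.mem_image.1 ha
    simp only [ne_eq, not_not, Finset.mem_filter, Finset.mem_univ, true_and] at hj
    simp [hne, hj]
  have := Finset.card_filter_add_card_filter_not (s := (univ : Finset (Fin q)))
    (fun j => α j ^ k ≠ p.eval (α j))
  rw [Finset.card_univ, Fintype.card_fin] at this
  change q - k ≤ #{j : Fin q | α j ^ k ≠ p.eval (α j)}
  omega

/-- Let `q = 2^m ≥ 8`, `3q - 4 ≤ 4k`, `k ≤ q - 4`, `r = q - k`. If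
`u ∈ 𝔽_q^q` has syndrome `H·uᵀ = (0, …, 0, w_{r-3}, w_{r-2}, w_{r-1})ᵀ` with `w_{r-3} ≠ 0`
and `w_{r-2} = θ⁻¹ w_{r-3}`, then `u` is not a deep hole of `TRS_k(𝔽_q, θ)`. -/
theorem not_deep_hole_of_syndrome {F : Type*} [Field F] [Fintype F] [DecidableEq F]
    (q m : ℕ) (hq : q = Fintype.card F) (hqm : q = 2 ^ m) (hq8 : 8 ≤ q)
    (k : ℕ) (hk3 : 3 * q - 4 ≤ 4 * k) (hk4 : k ≤ q - 4)
    (θ : F) (hθ : θ ≠ 0) (α : Fin q → F) (hα : Function.Bijective α) (u : Fin q → F)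
    (w : Fin (q - k) → F) (hw : (Hmat (q - k) θ α).mulVec u = w)
    (hw0 : ∀ i : Fin (q - k), (i : ℕ) < q - k - 3 → w i = 0)
    (hw3 : w ⟨q - k - 3, by omega⟩ ≠ 0)
    (hw2 : w ⟨q - k - 2, by omega⟩ = θ⁻¹ * w ⟨q - k - 3, by omega⟩) :
    ¬ IsDeepHole (TRS α k θ) u := by

  have hqm0 : Fintype.card F = 2 ^ m := hq ▸ hqm
  have : Fact (Nat.Prime 2) := ⟨Nat.prime_two⟩
  have : CharP F 2 := charP_of_card_eq_prime_pow hqm0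
  have two : (2 : F) = 0 := CharTwo.two_eq_zero
  have hk1 : 5 ≤ k := by omega
  -- `u` is the value table of `p`, and the syndrome prescribes the top coefficients of `p`
  set p := Lagrange.interpolate univ α u with hp
  have hpe : ∀ j, p.eval (α j) = u j := fun j =>
    Lagrange.eval_interpolate_at_node u hα.1.injOn (Finset.mem_univ j)
  have hpd : p.natDegree < Fintype.card F := by
    have h := Lagrange.degree_interpolate_lt (s := univ) u hα.1.injOn
    rw [← hp, Finset.card_univ, Fintype.card_fin] at h
    rw [← hq]
    rcases eq_or_ne p 0 with h0 | h0
    · rw [h0, natDegree_zero]; omega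
    · rwa [← Polynomial.natDegree_lt_iff_degree_lt h0] at h
  have hmom : ∀ i, i < q - 1 → ∑ j, α j ^ i * u j = -p.coeff (q - 1 - i) := by
    intro i hi
    rw [hq] at hi
    have h := sum_eval_mul_pow p hpd hi
    rw [← hα.sum_comp fun a => p.eval a * a ^ i, ← hq] at h
    rw [← h]
    exact Finset.sum_congr rfl fun j _ => by rw [hpe, mul_comm]
  have hsyn : ∀ i (hi : i < q - k), i ≠ q - k - 1 → w ⟨i, hi⟩ = -p.coeff (q - 1 - i) := by
    intro i hi hne
    rw [← hmom i (by omega), ← hw, Matrix.mulVec, dotProduct]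
    refine Finset.sum_congr rfl fun j _ => ?_
    simp [Hmat, crv, hne]
  have hlast : w ⟨q - k - 1, by omega⟩ = -p.coeff k + θ * p.coeff (k - 1) := by
    have h1 := hmom (q - k - 1) (by omega)
    have h2 := hmom (q - k) (by omega)
    rw [show q - 1 - (q - k - 1) = k by omega] at h1
    rw [show q - 1 - (q - k) = k - 1 by omega] at h2
    rw [← neg_neg (θ * p.coeff (k - 1)), ← mul_neg, ← h1, ← h2, ← hw, Finset.mul_sum,
      ← sub_eq_add_neg, ← Finset.sum_sub_distrib, Matrix.mulVec, dotProduct]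
    refine Finset.sum_congr rfl fun j _ => ?_
    simp only [Hmat, crv, Matrix.of_apply, if_true]
    ring
  set w₃ := w ⟨q - k - 3, by omega⟩ with hw₃
  set w₁ := w ⟨q - k - 1, by omega⟩ with hw₁
  have hc2 : p.coeff (k + 2) = -w₃ := by
    rw [hw₃, hsyn _ _ (by omega), neg_neg]; congr 1; omega
  have hc1 : p.coeff (k + 1) = -(θ⁻¹ * w₃) := by
    rw [← hw2, hsyn _ _ (by omega), neg_neg]; congr 1; omega
  have hc3 : ∀ j, k + 2 < j → p.coeff j = 0 := by
    intro j hj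
    rcases lt_or_ge j q with hjq | hjq
    · have h := hsyn (q - 1 - j) (by omega) (by omega)
      rw [hw0 _ (by dsimp only; omega), show q - 1 - (q - 1 - j) = j by omega] at h
      exact neg_eq_zero.1 h.symm
    · exact Polynomial.coeff_eq_zero_of_natDegree_lt (by omega)
  obtain ⟨T, b, hT, hT1, hT3⟩ := exists_sum_cubes (F := F) (by omega) (q - k - 4) (by omega)
    (inv_ne_zero hθ) (θ⁻¹ * (w₁ / w₃) + θ⁻¹ ^ 3)
  -- the zeros of the difference: `b` and the complement of `T`; the sum and the sum of cubes are
  -- the same as for `b` and `T`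
  set M : Multiset F := b ::ₘ (Tᶜ).val with hM
  have hMc : M.card = k + 2 := by
    rw [hM, Multiset.card_cons, Finset.card_val, Finset.card_compl]
    omega
  have hcomp : ∀ i, i < Fintype.card F - 1 → ∑ a ∈ Tᶜ, a ^ i = ∑ a ∈ T, a ^ i := by
    intro i hi
    have h := Finset.sum_add_sum_compl T fun a => a ^ i
    rw [FiniteField.sum_pow_lt_card_sub_one F i hi] at h
    exact (CharTwo.add_eq_zero.1 h).symm
  have he1 : M.esymm 1 = θ⁻¹ := by
    have h := hcomp 1 (by omega)
    simp only [pow_one] at h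
    rw [esymm_one, hM, Multiset.sum_cons, ← hT1, ← h, add_comm]
    simp
  have hp3 : (M.map (· ^ 3)).sum = θ⁻¹ * (w₁ / w₃) + θ⁻¹ ^ 3 := by
    rw [hM, Multiset.map_cons, Multiset.sum_cons, ← hT3, ← hcomp 3 (by omega), add_comm]
    rfl
  have hnewton := newton_three M
  rw [hp3, he1] at hnewton
  have hkey : w₃ * (M.esymm 2 + θ * M.esymm 3) = w₁ := by
    have h : w₁ / w₃ = M.esymm 2 + θ * M.esymm 3 := by
      have hi : θ * θ⁻¹ = 1 := mul_inv_cancel₀ hθ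
      linear_combination θ * hnewton + (-(w₁ / w₃) - 3 * M.esymm 2) * hi
        + (θ * M.esymm 3 - 2 * M.esymm 2) * two
    rw [← h, mul_div_cancel₀ _ hw3]
  set G : F[X] := (M.map fun a => X - C a).prod with hG
  have hGd : G.natDegree = k + 2 := by
    rw [hG, Polynomial.natDegree_multiset_prod_X_sub_C_eq_card, hMc]
  have hGc : ∀ j, j ≤ k + 2 → G.coeff (k + 2 - j) = (-1) ^ j * M.esymm j := by
    intro j hj
    rw [hG, Multiset.prod_X_sub_C_coeff _ (by omega), hMc, Nat.sub_sub_self hj]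
  have hG0 := hGc 0 (by omega)
  have hG1 := hGc 1 (by omega)
  have hG2 := hGc 2 (by omega)
  have hG3 := hGc 3 (by omega)
  rw [show k + 2 - 0 = k + 2 by omega, esymm_zero'] at hG0
  rw [show k + 2 - 1 = k + 1 by omega, he1] at hG1
  rw [show k + 2 - 2 = k by omega] at hG2
  rw [show k + 2 - 3 = k - 1 by omega] at hG3
  -- subtracting the multiple `-w₃ G` of `G` from `p` leaves a twisted polynomial
  have hmem : p - C (-w₃) * G ∈ Sset F k θ := by
    apply mem_Sset_of_coeff (by omega)
    · intro j hj
      rw [coeff_sub, coeff_C_mul]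
      rcases (by omega : j = k + 1 ∨ j = k + 2 ∨ k + 2 < j) with rfl | rfl | hj
      · rw [hc1, hG1]; linear_combination -(θ⁻¹ * w₃) * two
      · rw [hc2, hG0]; ring
      · rw [hc3 j hj, Polynomial.coeff_eq_zero_of_natDegree_lt (by omega)]; simp
    · simp only [coeff_sub, coeff_C_mul]
      rw [hG2, hG3]
      linear_combination hkey + hlast
  have hdist : distTo u (TRS α k θ) ≤ q - k - 1 := by
    have hc : (fun j => (p - C (-w₃) * G).eval (α j)) ∈ TRS α k θ := ⟨_, hmem, rfl⟩
    refine (distTo_le hc).trans ?_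
    unfold hammingDist
    rw [← Finset.card_image_of_injective _ hα.1, show q - k - 1 = #T by omega]
    refine Finset.card_le_card fun a ha => ?_
    obtain ⟨j, hj, rfl⟩ := Finset.mem_image.1 ha
    by_contra hjT
    refine (Finset.mem_filter.1 hj).2 ?_
    have hroot : G.eval (α j) = 0 := by
      rw [hG, Polynomial.eval_multiset_prod, Multiset.map_map]
      apply Multiset.prod_eq_zero
      rw [Multiset.mem_map]
      have hjM : α j ∈ M := Multiset.mem_cons_of_mem (Finset.mem_compl.2 hjT)
      exact ⟨α j, hjM, by simp⟩
    simp [hroot, hpe]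
  have hcov := le_covRad (q := q) (k := k) (by omega) θ hα
  intro h
  unfold IsDeepHole at h
  omega
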